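/- Let p: E → B and p': E' → B be fibrations with E and E' metric spaces, and suppose there is a map f: E → E' such that p' ∘ f is homotopic to p. Then dsecat(p') ≤ dsecat(p). -/

import Mathlib

open MeasureTheory unitInterval Set

universe u v

/-- A (Hurewicz) fibration: a continuous map with the homotopy lifting property
with respect to all topological spaces. -/
def IsHurewiczFibration {E B : Type*} [TopologicalSpace E] [TopologicalSpace B]
    (p : E → B) : Prop :=
  Continuous p ∧
  ∀ (X : Type u) [TopologicalSpace X] (f : X → E) (H : X × I → B),
    Continuous f → Continuous H → (∀ x, H (x, 0) = p (f x)) →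
    ∃ G : X × I → E, Continuous G ∧ (∀ x, G (x, 0) = f x) ∧ ∀ z, H z = p (G z)

/-- `dsecat p`: the distributional sectional category of `p : E → B` (with `E` a metric
space), namely the smallest `n` such that the fibration
`𝔅ₙ₊₁(p) : Eₙ₊₁(p) → B` of probability measures with finite support of size at most `n+1`
contained in single fibers of `p` (with the Lévy–Prokhorov metric topology) admits a
continuous section.  (Value `⊤` if no such `n` exists.) -/
noncomputable def dsecat {E : Type u} {B : Type v} [MetricSpace E] [TopologicalSpace B]
    (p : E → B) : ℕ∞ :=
  letI : MeasurableSpace E := borel E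
  haveI : BorelSpace E := ⟨rfl⟩
  sInf {n : ℕ∞ | ∃ m : ℕ, n = (m : ℕ∞) ∧
    ∃ s : B → LevyProkhorov (ProbabilityMeasure E), Continuous s ∧
      ∀ b : B, ∃ S : Finset E, S.card ≤ m + 1 ∧ (↑S : Set E) ⊆ p ⁻¹' {b} ∧
        (s b).toMeasure (↑S : Set E) = 1}

/-- The classical sectional category (Schwarz genus) of a map: the least `n` such that the
base admits a cover by `n+1` open sets over each of which there is a continuous partial
section. -/
noncomputable def secat {E : Type u} {B : Type v} [TopologicalSpace E] [TopologicalSpace B]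
    (p : E → B) : ℕ∞ :=
  sInf {n : ℕ∞ | ∃ m : ℕ, n = (m : ℕ∞) ∧
    ∃ U : Fin (m + 1) → Set B, (∀ i, IsOpen (U i)) ∧ (⋃ i, U i) = Set.univ ∧
      ∀ i, ∃ s : U i → E, Continuous s ∧ ∀ x : U i, p (s x) = (x : B)}

/-- The point `(i)/(r-1)` of the unit interval, for `i : Fin r`. -/
noncomputable def tDiv (r : ℕ) (i : Fin r) : I :=
  Set.projIcc (0 : ℝ) 1 zero_le_one ((i : ℝ) / (r - 1))

/-- The space `E^I_B` of paths in `E` lying in one single fiber of `p : E → B`. -/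
def FibredPaths {E : Type u} {B : Type v} [TopologicalSpace E] [TopologicalSpace B]
    (p : E → B) : Type u :=
  {γ : C(I, E) // ∃ b : B, ∀ t : I, p (γ t) = b}

/-- The fibred product `E^r_B` of `r` copies of `E` over `B`. -/
def FibredProd {E : Type u} {B : Type v} [TopologicalSpace E] [TopologicalSpace B]
    (p : E → B) (r : ℕ) : Type u :=
  {x : Fin r → E // ∀ i j, p (x i) = p (x j)}

/-- The fibration `Π_r^E : E^I_B → E^r_B`,
`γ ↦ (γ(0), γ(1/(r-1)), …, γ((r-2)/(r-1)), γ(1))`. -/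
noncomputable def parmEval {E : Type u} {B : Type v} [TopologicalSpace E] [TopologicalSpace B]
    (p : E → B) (r : ℕ) : FibredPaths p → FibredProd p r :=
  fun γ => ⟨fun i => γ.1 (tDiv r i), by
    obtain ⟨b, hb⟩ := γ.2
    intro i j
    rw [hb, hb]⟩

noncomputable instance {E : Type u} {B : Type v} [MetricSpace E] [TopologicalSpace B] (p : E → B) :
    MetricSpace (FibredPaths p) :=
  inferInstanceAs (MetricSpace {γ : C(I, E) // ∃ b : B, ∀ t : I, p (γ t) = b})

instance {E : Type u} {B : Type v} [TopologicalSpace E] [TopologicalSpace B] (p : E → B) :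
    TopologicalSpace (FibredPaths p) :=
  inferInstanceAs (TopologicalSpace {γ : C(I, E) // ∃ b : B, ∀ t : I, p (γ t) = b})

instance {E : Type u} {B : Type v} [TopologicalSpace E] [TopologicalSpace B] (p : E → B)
    (r : ℕ) : TopologicalSpace (FibredProd p r) :=
  inferInstanceAs (TopologicalSpace {x : Fin r → E // ∀ i j, p (x i) = p (x j)})

/-- The `r`-th sequential parametrized distributional complexity
`dTC_r[p : E → B] = dsecat (Π_r^E)`. -/
noncomputable def dTCfib {E : Type u} {B : Type v} [MetricSpace E] [TopologicalSpace B]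
    (p : E → B) (r : ℕ) : ℕ∞ :=
  dsecat (parmEval p r)

/-- The `r`-th sequential parametrized topological complexity
`TC_r[p : E → B] = secat (Π_r^E)`. -/
noncomputable def TCfib {E : Type u} {B : Type v} [TopologicalSpace E] [TopologicalSpace B]
    (p : E → B) (r : ℕ) : ℕ∞ :=
  secat (parmEval p r)

/-- The fibration `π_r^X : X^I → X^r`, `φ ↦ (φ(0), φ(1/(r-1)), …, φ(1))`. -/
noncomputable def freeEval (X : Type u) [TopologicalSpace X] (r : ℕ) :
    C(I, X) → (Fin r → X) :=
  fun φ i => φ (tDiv r i)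

/-- The `r`-th sequential distributional complexity `dTC_r(X) = dsecat (π_r^X)`. -/
noncomputable def dTC (X : Type u) [MetricSpace X] (r : ℕ) : ℕ∞ :=
  dsecat (freeEval X r)

/-- The distributional category `dcat(X) = dsecat (P₀(X) → X)` of a pointed space,
where `P₀(X) = {φ : I → X | φ(1) = x₀}` and the fibration is evaluation at `0`. -/
noncomputable def dcat (X : Type u) [MetricSpace X] (x₀ : X) : ℕ∞ :=
  dsecat (fun φ : {φ : C(I, X) // φ 1 = x₀} => φ.1 0)

/-!
Lifting the homotopy from `p' ∘ f` to `p` through the fibration `p'` and evaluating the lift at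
time `1` deforms `f` to a map `g` with `p' ∘ g = p`. Push-forward along `g` then carries measures
supported in a fibre of `p` to measures supported in the corresponding fibre of `p'`, without
enlarging the number of points of the support.

Push-forward along a continuous map `g` is Lévy–Prokhorov continuous at every finite measure `μ`,
although `g` need not be uniformly continuous: for fixed `ε`, the open sets of points at which `g`
oscillates by more than `ε` at scale `δ` decrease to `∅` as `δ → 0`, so their `μ`-measure tends
to `0`.
-/

section Pushforward

open Filter Metric
open scoped ENNReal Topology

variable {X Y : Type*} [PseudoEMetricSpace X] [PseudoEMetricSpace Y] {g : X → Y} {ε δ r : ℝ≥0∞}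

/-- The points at which `g` oscillates by more than `ε` at scale `δ`: it measures how far `g` is
from being uniformly continuous. The strict inequalities make it an open set when `g` is
continuous. -/
def largeOscillationSet (g : X → Y) (ε δ : ℝ≥0∞) : Set X :=
  {x | ∃ y, edist x y < δ ∧ ε < edist (g x) (g y)}

theorem largeOscillationSet_mono (g : X → Y) (ε : ℝ≥0∞) : Monotone (largeOscillationSet g ε) :=
  fun _ _ hδ _ ⟨y, hxy, hgxy⟩ ↦ ⟨y, hxy.trans_le hδ, hgxy⟩

theorem edist_le_of_notMem_largeOscillationSet {x y : X} (hx : x ∉ largeOscillationSet g ε δ)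
    (hxy : edist x y < δ) : edist (g x) (g y) ≤ ε :=
  not_lt.1 fun h ↦ hx ⟨y, hxy, h⟩

theorem isOpen_largeOscillationSet (hg : Continuous g) : IsOpen (largeOscillationSet g ε δ) := by
  simp only [largeOscillationSet, ofPred_exists]
  refine isOpen_iUnion fun y ↦ ?_
  have hnear : IsOpen {x | edist x y < δ} := isOpen_lt (by fun_prop) continuous_const
  have hfar : IsOpen {x | ε < edist (g x) (g y)} := isOpen_lt continuous_const (by fun_prop)
  exact hnear.inter hfar

theorem biInter_largeOscillationSet_eq_empty (hg : Continuous g) (hε : 0 < ε) :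
    ⋂ δ > 0, largeOscillationSet g ε δ = ∅ := by
  refine eq_empty_of_forall_notMem fun x hx ↦ ?_
  obtain ⟨δ, hδ, hgδ⟩ := EMetric.continuousAt_iff.1 (hg.continuousAt (x := x)) ε hε
  obtain ⟨y, hxy, hgxy⟩ := mem_iInter₂.1 hx δ hδ
  rw [edist_comm] at hxy hgxy
  exact hgxy.not_gt (hgδ hxy)

theorem thickening_preimage_subset_union_largeOscillationSet (hδ : δ ≠ ∞) (hεr : ε < r)
    (hr : r ≠ ∞) (A : Set Y) :
    thickening δ.toReal (g ⁻¹' A) ⊆ g ⁻¹' thickening r.toReal A ∪ largeOscillationSet g ε δ := by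
  intro x hx
  simp only [mem_thickening_iff_exists_edist_lt, ENNReal.ofReal_toReal, mem_union, mem_preimage,
    hδ, hr, ne_eq, not_false_eq_true] at hx ⊢
  obtain ⟨y, hy, hxy⟩ := hx
  by_cases hosc : x ∈ largeOscillationSet g ε δ
  · exact .inr hosc
  · exact .inl ⟨g y, hy, (edist_le_of_notMem_largeOscillationSet hosc hxy).trans_lt hεr⟩

theorem thickening_preimage_diff_largeOscillationSet_subset (hδ : δ ≠ ∞) (hεr : ε < r)
    (hr : r ≠ ∞) (A : Set Y) :
    thickening δ.toReal (g ⁻¹' A \ largeOscillationSet g ε δ) ⊆ g ⁻¹' thickening r.toReal A := by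
  intro x hx
  simp only [mem_thickening_iff_exists_edist_lt, ENNReal.ofReal_toReal, mem_preimage,
    hδ, hr, ne_eq, not_false_eq_true] at hx ⊢
  obtain ⟨y, ⟨hy, hosc⟩, hxy⟩ := hx
  rw [edist_comm] at hxy
  refine ⟨g y, hy, ?_⟩
  rw [edist_comm]
  exact (edist_le_of_notMem_largeOscillationSet hosc hxy).trans_lt hεr

variable [MeasurableSpace X] [OpensMeasurableSpace X]

theorem tendsto_measure_largeOscillationSet (hg : Continuous g) (hε : 0 < ε) (μ : Measure X)
    [IsFiniteMeasure μ] :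
    Tendsto (fun δ ↦ μ (largeOscillationSet g ε δ)) (𝓝[>] 0) (𝓝 0) := by
  have hlim : Tendsto (μ ∘ largeOscillationSet g ε) (𝓝[>] 0)
      (𝓝 (μ (⋂ δ > 0, largeOscillationSet g ε δ))) :=
    tendsto_measure_biInter_gt
      (fun _ _ ↦ (isOpen_largeOscillationSet hg).measurableSet.nullMeasurableSet)
      (fun _ _ _ hδ ↦ largeOscillationSet_mono g ε hδ) ⟨1, one_pos, measure_ne_top μ _⟩
  rwa [biInter_largeOscillationSet_eq_empty hg hε, measure_empty] at hlim

variable [MeasurableSpace Y] [BorelSpace Y]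

theorem levyProkhorovEDist_map_le {μ ν : Measure X} (hg : Continuous g) (ε : ℝ≥0∞)
    (hμν : levyProkhorovEDist μ ν < δ) :
    levyProkhorovEDist (μ.map g) (ν.map g) ≤ max ε (μ (largeOscillationSet g ε δ) + δ) := by
  rcases eq_or_ne δ ∞ with rfl | hδ
  · simp only [add_top, le_top, sup_of_le_right]
  set L := largeOscillationSet g ε δ
  refine levyProkhorovEDist_le_of_forall _ _ _ fun r A hr hr_top hA ↦ ?_
  obtain ⟨hεr, hLr⟩ := max_lt_iff.1 hr
  have hgA : MeasurableSet (g ⁻¹' A) := hg.measurable hA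
  have hL : MeasurableSet L := (isOpen_largeOscillationSet hg).measurableSet
  rw [Measure.map_apply hg.measurable hA, Measure.map_apply hg.measurable hA,
    Measure.map_apply hg.measurable isOpen_thickening.measurableSet,
    Measure.map_apply hg.measurable isOpen_thickening.measurableSet]
  constructor
  · calc μ (g ⁻¹' A)
      _ ≤ μ (g ⁻¹' A \ L) + μ L := tsub_le_iff_right.1 le_measure_sdiff
      _ ≤ ν (thickening δ.toReal (g ⁻¹' A \ L)) + δ + μ L := by
          gcongr
          exact left_measure_le_of_levyProkhorovEDist_lt hμν (hgA.diff hL)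
      _ ≤ ν (g ⁻¹' thickening r.toReal A) + δ + μ L := by
          gcongr
          exact thickening_preimage_diff_largeOscillationSet_subset hδ hεr hr_top.ne A
      _ = ν (g ⁻¹' thickening r.toReal A) + (μ L + δ) := by ring
      _ ≤ ν (g ⁻¹' thickening r.toReal A) + r := by gcongr
  · calc ν (g ⁻¹' A)
      _ ≤ μ (thickening δ.toReal (g ⁻¹' A)) + δ :=
          right_measure_le_of_levyProkhorovEDist_lt hμν hgA
      _ ≤ μ (g ⁻¹' thickening r.toReal A ∪ L) + δ := by
          gcongr
          exact thickening_preimage_subset_union_largeOscillationSet hδ hεr hr_top.ne A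
      _ ≤ μ (g ⁻¹' thickening r.toReal A) + μ L + δ := by
          gcongr
          exact measure_union_le _ _
      _ = μ (g ⁻¹' thickening r.toReal A) + (μ L + δ) := add_assoc _ _ _
      _ ≤ μ (g ⁻¹' thickening r.toReal A) + r := by gcongr

theorem exists_forall_levyProkhorovEDist_map_lt (hg : Continuous g) (μ : Measure X)
    [IsFiniteMeasure μ] (hε : 0 < ε) :
    ∃ δ > 0, ∀ ν, levyProkhorovEDist μ ν < δ → levyProkhorovEDist (μ.map g) (ν.map g) < ε := by
  obtain ⟨η, hη, hηε⟩ := exists_between hε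
  have hlim : Tendsto (fun δ ↦ μ (largeOscillationSet g η δ) + δ) (𝓝[>] 0) (𝓝 0) := by
    simpa only [id, add_zero] using
      (tendsto_measure_largeOscillationSet hg hη μ).add (tendsto_id.mono_left nhdsWithin_le_nhds)
  obtain ⟨δ, hδε, hδ⟩ := ((hlim.eventually_lt_const hε).and self_mem_nhdsWithin).exists
  exact ⟨δ, hδ, fun ν hν ↦ (levyProkhorovEDist_map_le hg η hν).trans_lt (max_lt hηε hδε)⟩

/-- Push-forward of probability measures along a continuous map, between the spaces of probability
measures with the Lévy–Prokhorov metric. -/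
noncomputable def levyProkhorovMap (g : X → Y) (hg : Continuous g)
    (μ : LevyProkhorov (ProbabilityMeasure X)) : LevyProkhorov (ProbabilityMeasure Y) :=
  .ofMeasure (μ.toMeasure.map hg.measurable.aemeasurable)

theorem continuous_levyProkhorovMap (hg : Continuous g) : Continuous (levyProkhorovMap g hg) := by
  refine continuous_iff_continuousAt.2 fun μ ↦ EMetric.continuousAt_iff.2 fun ε hε ↦ ?_
  obtain ⟨δ, hδ, hmap⟩ :=
    exists_forall_levyProkhorovEDist_map_lt hg (μ.toMeasure : Measure X) hε
  refine ⟨δ, hδ, fun ν hν ↦ ?_⟩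
  rw [edist_comm, LevyProkhorov.edist_probabilityMeasure_def] at hν ⊢
  exact hmap _ hν

end Pushforward

section DistributionalSections

variable {E E' B : Type*} [TopologicalSpace B] {p : E → B} {p' : E' → B} {g : E → E'}

/-- `s` is a continuous section of `𝔅ₖ(p) : Eₖ(p) → B`. It is encoded as a map into all probability
measures on `E`, and "supported in `S`" is expressed as `S` having measure `1`. -/
def IsDistributionalSection [PseudoEMetricSpace E] [MeasurableSpace E] [OpensMeasurableSpace E]
    (p : E → B) (k : ℕ) (s : B → LevyProkhorov (ProbabilityMeasure E)) : Prop :=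
  Continuous s ∧ ∀ b, ∃ S : Finset E, S.card ≤ k ∧ (S : Set E) ⊆ p ⁻¹' {b} ∧
    (s b).toMeasure (S : Set E) = 1

theorem IsDistributionalSection.map [PseudoEMetricSpace E] [MeasurableSpace E]
    [OpensMeasurableSpace E] [PseudoEMetricSpace E'] [MeasurableSpace E'] [BorelSpace E'] {k : ℕ}
    {s : B → LevyProkhorov (ProbabilityMeasure E)} (hs : IsDistributionalSection p k s)
    (hg : Continuous g) (hpg : p' ∘ g = p) :
    IsDistributionalSection p' k (levyProkhorovMap g hg ∘ s) := by
  classical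
  refine ⟨(continuous_levyProkhorovMap hg).comp hs.1, fun b ↦ ?_⟩
  obtain ⟨S, hcard, hfiber, hS⟩ := hs.2 b
  refine ⟨S.image g, Finset.card_image_le.trans hcard, ?_, ?_⟩
  · rwa [Finset.coe_image, image_subset_iff, ← preimage_comp, hpg]
  · refine le_antisymm (ProbabilityMeasure.apply_le_one _ _) ?_
    rw [Finset.coe_image, ← hS, ← ENNReal.coe_le_coe,
      ProbabilityMeasure.ennreal_coeFn_eq_coeFn_toMeasure,
      ProbabilityMeasure.ennreal_coeFn_eq_coeFn_toMeasure]
    exact Measure.le_map_apply_image hg.measurable.aemeasurable _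

theorem dsecat_le_of_comp_eq [MetricSpace E] [MetricSpace E'] (hg : Continuous g)
    (hpg : p' ∘ g = p) : dsecat p' ≤ dsecat p := by
  let : MeasurableSpace E := borel E
  have : BorelSpace E := ⟨rfl⟩
  let : MeasurableSpace E' := borel E'
  have : BorelSpace E' := ⟨rfl⟩
  refine sInf_le_sInf ?_
  rintro _ ⟨m, rfl, s, hs⟩
  exact ⟨m, rfl, _, IsDistributionalSection.map hs hg hpg⟩

end DistributionalSections

universe w

theorem IsHurewiczFibration.exists_lift {X : Type u} {E B : Type*} [TopologicalSpace X]
    [TopologicalSpace E] [TopologicalSpace B] {p : E → B}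
    (hp : IsHurewiczFibration.{max u w} p) {f : X → E} (hf : Continuous f) {H : X × I → B}
    (hH : Continuous H) (hH₀ : ∀ x, H (x, 0) = p (f x)) :
    ∃ G : X × I → E, Continuous G ∧ (∀ x, G (x, 0) = f x) ∧ ∀ z, H z = p (G z) := by
  obtain ⟨G, hG, hG₀, hpG⟩ := hp.2 (ULift.{w} X) (fun x ↦ f x.down) (fun z ↦ H (z.1.down, z.2))
    (by fun_prop) (by fun_prop) (fun x ↦ hH₀ x.down)
  exact ⟨fun z ↦ G (.up z.1, z.2), by fun_prop, fun x ↦ hG₀ (.up x), fun z ↦ hpG (.up z.1, z.2)⟩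

theorem dsecat_le_of_factor_up_to_homotopy_general {E : Type u} {E' B : Type*} [MetricSpace E]
    [MetricSpace E'] [TopologicalSpace B] (p : E → B) (p' : E' → B) (f : E → E')
    (hp' : IsHurewiczFibration.{max u w} p') (hf : Continuous f)
    (hhtpy : ∃ H : E × I → B, Continuous H ∧
      (∀ e, H (e, 0) = p' (f e)) ∧ (∀ e, H (e, 1) = p e)) :
    dsecat p' ≤ dsecat p := by
  obtain ⟨H, hH, hH₀, hH₁⟩ := hhtpy
  obtain ⟨G, hG, -, hpG⟩ := hp'.exists_lift hf hH hH₀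
  have hg : Continuous fun e ↦ G (e, 1) := by fun_prop
  exact dsecat_le_of_comp_eq hg (funext fun e ↦ (hpG (e, 1)).symm.trans (hH₁ e))

/-- If `p : E → B` and `p' : E' → B` are fibrations with metric total
spaces and `f : E → E'` is a map with `p' ∘ f` homotopic to `p`, then
`dsecat p' ≤ dsecat p`. -/
theorem dsecat_le_of_factor_up_to_homotopy {E E' B : Type} [MetricSpace E] [MetricSpace E']
    [TopologicalSpace B] (p : E → B) (p' : E' → B) (f : E → E')
    (hp : IsHurewiczFibration p) (hp' : IsHurewiczFibration p')
    (hf : Continuous f)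
    (hhtpy : ∃ H : E × I → B, Continuous H ∧
      (∀ e, H (e, 0) = p' (f e)) ∧ (∀ e, H (e, 1) = p e)) :
    dsecat p' ≤ dsecat p :=
  dsecat_le_of_factor_up_to_homotopy_general p p' f hp' hf hhtpy
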